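/- arXiv:1407.2766 — 2 statements merged into one kernel-verified Lean document; each statement's English description precedes it below -/
import Mathlib

section
/- Let M be a type equipped with a binary operation · and a distinguished element e, and suppose that (e·((x·y)·(z·y)))·z = x holds for all x, y, z ∈ M (formula 81M2↓). Then (M, ·) is a Boolean group with identity element e: the operation · is associative and commutative, e·x = x for all x, and x·x = e for all x. -/
/-!
Write `R z` for right multiplication by `z` and `L` for left multiplication by `e`. The axiom says
`R z ∘ L ∘ R (z * y) ∘ R y = id`, so every `R z` is bijective; hence so is `L`, with inverse
`R (z * y) ∘ R y ∘ R z`. Taking `x = z` in the axiom and cancelling shows that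
`(z * y) * (z * y)` does not depend on `y`; since `L` is onto, all squares are equal to one
element `c`. Then `e * c` is a left identity, which forces `e * c = c` and `e = c`. Now `L = id`
and `((x * z) * y) * (z * y) = x`, whose specialisations give the remaining laws.
-/

theorem single_axiom_81M2down
    (M : Type) (mul : M → M → M) (e : M)
    (h : ∀ x y z : M, mul (mul e (mul (mul x y) (mul z y))) z = x) :
    (∀ x y z : M, mul (mul x y) z = mul x (mul y z)) ∧
    (∀ x y : M, mul x y = mul y x) ∧
    (∀ x : M, mul e x = x) ∧
    (∀ x : M, mul x x = e) := by
  have rinj : ∀ {a b : M} (y : M), mul a y = mul b y → a = b := by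
    intro a b y hab
    rw [← h a y e, hab, h]
  have rsurj : ∀ x z : M, ∃ w, mul w z = x := fun x z => ⟨_, h x e z⟩
  have hT : ∀ x y z : M, mul e (mul (mul (mul x z) y) (mul z y)) = x :=
    fun x y z => rinj z (h (mul x z) y z)
  have linj : ∀ {a b : M}, mul e a = mul e b → a = b := by
    have key : ∀ a, a = mul (mul (mul (mul e a) e) e) (mul e e) := by
      intro a
      obtain ⟨u, rfl⟩ := rsurj a (mul e e)
      obtain ⟨v, rfl⟩ := rsurj u e
      obtain ⟨w, rfl⟩ := rsurj v e
      rw [hT]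
    intro a b hab
    rw [key a, hab, ← key b]
  have hq : ∀ z y y' : M, mul (mul z y) (mul z y) = mul (mul z y') (mul z y') :=
    fun z y y' => linj (rinj z ((h z y z).trans (h z y' z).symm))
  obtain ⟨c, hc⟩ : ∃ c, ∀ s, mul s s = c := by
    refine ⟨mul (mul e e) (mul e e), fun s => ?_⟩
    rw [← hT s e e]
    exact hq _ _ _
  have hec : ∀ z, mul (mul e c) z = z := by
    intro z
    have := h z z z
    rwa [hc] at this
  have hcc : mul e c = c := (hec (mul e c)).symm.trans (hc _)
  have hce : e = c := rinj c (hcc.trans (hc c).symm)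
  have he : ∀ z, mul e z = z := by
    intro z
    have := hec z
    rwa [hcc, ← hce] at this
  have hsq : ∀ x, mul x x = e := fun x => (hc x).trans hce.symm
  have hT' : ∀ x y z : M, mul (mul (mul x z) y) (mul z y) = x :=
    fun x y z => (he _).symm.trans (hT x y z)
  have h1 : ∀ x y : M, mul y (mul x y) = x := by
    intro x y
    have := hT' x y x
    rwa [hsq, he] at this
  have hxe : ∀ x, mul x e = x := fun x => (he _).symm.trans (h1 x e)
  have h2 : ∀ x y : M, mul (mul x y) y = x := by
    intro x y
    have := hT' x y e
    rwa [hxe, he] at this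
  refine ⟨fun x y z => ?_, fun x y => ?_, he, hsq⟩
  · exact rinj (mul y z) ((hT' x z y).trans (h2 x _).symm)
  · have := h1 (mul x y) y
    rw [h2] at this
    exact this.symm
end

section
/- Let M be a type equipped with a binary operation · and a distinguished element e, and suppose that e·(((x·y)·z)·(y·z)) = x holds for all x, y, z ∈ M (formula 81R3↑). Then (M, ·) is a Boolean group with identity element e: the operation · is associative and commutative, e·x = x for all x, and x·x = e for all x. -/
/-!
Write `x * y` for the operation, and call `p` a preimage of `x` when `e * p = x`. The axiom `h`
says that `W x y z = ((x * y) * z) * (y * z)` is a preimage of `x`, for all `y` and `z`; in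
particular left multiplication by `e` is surjective. Replacing subterms of the axiom by preimages
gives three rules that produce new preimages from old ones (`preimage_one`, `preimage_left`,
`preimage_mul`).

The main difficulty is `e * e = e`. Taking a preimage `p` of `e`, the element
`u = ((e * e) * p) * e` is again a preimage of `e` by `preimage_left`, so it suffices to show
`e * (e * u) = e`. The lemma `mul_descent` reduces this to `e * (e * (u * e)) = e`, and then to
showing that `s = (e * e) * W ((e * e) * p) e e` is a preimage of `e`, which `mul_ascent` does.

Once `e * e = e` is known, every square is a preimage of `e`, from which `x * x = e` follows
(`sq_eq`). Then `h y x (y * x)` becomes `e * (e * (x * (y * x))) = y`, which makes `e` a two-sided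
identity. The remaining laws `x * (y * x) = y` and `(x * y) * y = x` yield commutativity, and `h`
itself becomes associativity.
-/

section BooleanAxiom

variable {M : Type*} [Mul M] {e : M}

theorem preimage_one (h : ∀ x y z : M, e * (((x * y) * z) * (y * z)) = x)
    {q x : M} (hq : e * q = x) (y : M) : e * ((x * y) * (q * y)) = e := by
  simpa only [hq] using h e q y

theorem preimage_left (h : ∀ x y z : M, e * (((x * y) * z) * (y * z)) = x)
    {q y : M} (hq : e * q = y) (x : M) : e * (((x * e) * q) * y) = x := by
  simpa only [hq] using h x e q

theorem preimage_mul (h : ∀ x y z : M, e * (((x * y) * z) * (y * z)) = x)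
    {p q x : M} (hp : e * p = e) (hq : e * q = x) : e * (x * (p * q)) = e := by
  simpa only [hq] using preimage_one h hp q

/-- The axiom writes `e * y` as `e * (p * q)` with `p = ((e * y) * z) * (y * z)` and
`q = z * (y * z)`, both of them preimages of `e`. -/
theorem mul_descent (h : ∀ x y z : M, e * (((x * y) * z) * (y * z)) = x)
    {y z : M} (hyz : e * (z * (y * z)) = e) : e * (e * y) = e :=
  (congrArg (e * ·) (h (e * y) z (y * z))).symm.trans (preimage_mul h (h e y z) hyz)

/-- By `preimage_left`, `e * S` equals `e * (p * y)` with `p = ((e * S) * e) * (S * e)`, where `p`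
and `y` are preimages of `e`. -/
theorem mul_ascent (h : ∀ x y z : M, e * (((x * y) * z) * (y * z)) = x)
    {S y : M} (hS : e * (S * e) = y) (hy : e * y = e) : e * (e * S) = e :=
  (congrArg (e * ·) (preimage_left h hS (e * S))).symm.trans (preimage_mul h (h e S e) hy)

theorem e_mul_e (h : ∀ x y z : M, e * (((x * y) * z) * (y * z)) = x) : e * e = e := by
  obtain ⟨p, hp⟩ : ∃ p, e * p = e := ⟨_, h e e e⟩
  obtain ⟨b, hb⟩ : ∃ b, b = (e * e) * p := ⟨_, rfl⟩
  have hu : e * (b * e) = e := hb ▸ preimage_left h hp e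
  obtain ⟨s, hs⟩ : ∃ s, s = (e * e) * (((b * e) * e) * (e * e)) := ⟨_, rfl⟩
  have hsb : e * (s * b) = e := hs ▸ preimage_left h (h b e e) e
  -- `S = ((s * b) * e) * (b * e)` is a preimage of `s`, and `S * e` is one of `s * b`.
  have hse : e * s = e := by
    have := mul_ascent h (preimage_left h hu (s * b)) hsb
    rwa [h s b e] at this
  have hue : e * (e * ((b * e) * e)) = e := mul_descent h (z := e * e) (hs ▸ hse)
  have := mul_descent h hue
  rwa [hu] at this

theorem e_mul_sq (h : ∀ x y z : M, e * (((x * y) * z) * (y * z)) = x) (x : M) :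
    e * (x * x) = e := by
  have hx := h x e e
  have := preimage_mul h (e_mul_e h) hx
  rwa [hx] at this

theorem e_mul_mul_e_e_e (h : ∀ x y z : M, e * (((x * y) * z) * (y * z)) = x) (x : M) :
    e * (((x * e) * e) * e) = x :=
  preimage_left h (e_mul_e h) x

theorem e_mul_sq_mul (h : ∀ x y z : M, e * (((x * y) * z) * (y * z)) = x)
    {y : M} (hy : e * y = e) (x : M) : e * (e * ((x * x) * y)) = e := by
  have := preimage_one h (e_mul_sq h x) y
  rwa [hy] at this

theorem preimage_mul_e_e (h : ∀ x y z : M, e * (((x * y) * z) * (y * z)) = x)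
    {y : M} (hy : e * y = e) : e * ((y * e) * e) = e := by
  -- `(y * e) * e` is `e * ((a * a) * y)` with `a = ((y * e) * e) * e`, a preimage of `y`.
  have h1 := preimage_left h (e_mul_mul_e_e_e h y) ((y * e) * e)
  rw [← h1]
  exact e_mul_sq_mul h hy _

theorem sq_eq (h : ∀ x y z : M, e * (((x * y) * z) * (y * z)) = x) (x : M) : x * x = e := by
  -- With `a = ((x * x) * e) * e`, a preimage of `e`, `h1` reads
  -- `e * ((a * a) * e) = (x * x) * e`. Since this element is again a preimage of `e`,
  -- `preimage_mul_e_e` applies to it and gives `e * ((((x * x) * e) * e) * e) = e`.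
  have hq := preimage_mul_e_e h (e_mul_sq h x)
  have h1 := preimage_left h hq ((x * x) * e)
  have h2 : e * (e * (((((x * x) * e) * e) * (((x * x) * e) * e)) * e)) = e :=
    e_mul_sq_mul h (e_mul_e h) _
  have h3 := preimage_mul_e_e h h2
  rw [h1] at h3
  exact (e_mul_mul_e_e_e h (x * x)).symm.trans h3

theorem e_mul_e_mul (h : ∀ x y z : M, e * (((x * y) * z) * (y * z)) = x) (x y : M) :
    e * (e * (x * (y * x))) = y := by
  simpa only [sq_eq h] using h y x (y * x)

theorem e_mul_eq (h : ∀ x y z : M, e * (((x * y) * z) * (y * z)) = x) (x : M) : e * x = x := by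
  have h1 : e * (e * (x * e)) = x := by simpa only [sq_eq h] using e_mul_e_mul h x x
  have h2 := e_mul_e_mul h e x
  rwa [h1] at h2

theorem mul_e_eq (h : ∀ x y z : M, e * (((x * y) * z) * (y * z)) = x) (x : M) : x * e = x := by
  simpa only [sq_eq h, e_mul_eq h] using e_mul_e_mul h x x

theorem mul_mul_self_right (h : ∀ x y z : M, e * (((x * y) * z) * (y * z)) = x) (x y : M) :
    (x * y) * y = x := by
  simpa only [e_mul_eq h, mul_e_eq h] using preimage_left h (e_mul_eq h y) x

theorem mul_comm_of_axiom (h : ∀ x y z : M, e * (((x * y) * z) * (y * z)) = x) (x y : M) :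
    x * y = y * x := by
  have h1 := e_mul_e_mul h y (x * y)
  rw [e_mul_eq h, e_mul_eq h, mul_mul_self_right h] at h1
  exact h1.symm

theorem mul_assoc_of_axiom (h : ∀ x y z : M, e * (((x * y) * z) * (y * z)) = x) (x y z : M) :
    (x * y) * z = x * (y * z) := by
  have h1 := mul_mul_self_right h ((x * y) * z) (y * z)
  have h2 := h x y z
  rw [e_mul_eq h] at h2
  rw [h2] at h1
  exact h1.symm

end BooleanAxiom

theorem single_axiom_81R3up
    (M : Type) (mul : M → M → M) (e : M)
    (h : ∀ x y z : M, mul e (mul (mul (mul x y) z) (mul y z)) = x) :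
    (∀ x y z : M, mul (mul x y) z = mul x (mul y z)) ∧
    (∀ x y : M, mul x y = mul y x) ∧
    (∀ x : M, mul e x = x) ∧
    (∀ x : M, mul x x = e) := by
  let : Mul M := ⟨mul⟩
  exact ⟨mul_assoc_of_axiom h, mul_comm_of_axiom h, e_mul_eq h, sq_eq h⟩
end
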